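/- The Steiner triple system of order 43 on Z_43 obtained by developing the base blocks {0,1,16}, {0,2,14}, {0,3,11}, {0,4,37}, {0,5,25}, {0,7,24}, {0,9,22} modulo 43 is nonsequenceable; moreover, for every point x ∈ Z_43 there exists an almost parallel class of this system that does not contain x. -/

import Mathlib

/-- `B` is (the block set of) a partial Steiner triple system on the point set `X`:
every block has 3 points and every pair of distinct points lies in at most one block. -/
def isPSTS {X : Type*} [DecidableEq X] (B : Finset (Finset X)) : Prop :=
  (∀ b ∈ B, b.card = 3) ∧
  ∀ p q : X, p ≠ q → (B.filter (fun b => p ∈ b ∧ q ∈ b)).card ≤ 1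

/-- `B` is (the block set of) a Steiner triple system on the point set `X`:
every block has 3 points and every pair of distinct points lies in exactly one block. -/
def isSTS {X : Type*} [DecidableEq X] (B : Finset (Finset X)) : Prop :=
  (∀ b ∈ B, b.card = 3) ∧
  ∀ p q : X, p ≠ q → (B.filter (fun b => p ∈ b ∧ q ∈ b)).card = 1

/-- The finset `S` can be partitioned into blocks of `B`. -/
def blocksPartition {X : Type*} [DecidableEq X] (B : Finset (Finset X)) (S : Finset X) : Prop :=
  ∃ P : Finset (Finset X), P ⊆ B ∧
    (∀ b₁ ∈ P, ∀ b₂ ∈ P, b₁ ≠ b₂ → Disjoint b₁ b₂) ∧ P.biUnion id = S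

/-- `A` is an almost parallel class of `B`: a set of pairwise disjoint blocks
covering all points of `X` except exactly one. -/
def isAPC {X : Type*} [DecidableEq X] [Fintype X] (B A : Finset (Finset X)) : Prop :=
  A ⊆ B ∧ (∀ b₁ ∈ A, ∀ b₂ ∈ A, b₁ ≠ b₂ → Disjoint b₁ b₂) ∧
    ∃ y : X, A.biUnion id = Finset.univ.erase y

/-- `B` is sequenceable: there is a sequencing of the points (a bijection from
`Fin n` to `X`) such that no proper segment can be partitioned into blocks of `B`. -/
def sequenceable {X : Type*} [DecidableEq X] [Fintype X] (B : Finset (Finset X)) : Prop :=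
  ∃ f : Fin (Fintype.card X) ≃ X,
    ∀ i j : Fin (Fintype.card X), i ≤ j →
      ¬((i : ℕ) = 0 ∧ (j : ℕ) = Fintype.card X - 1) →
      ¬ blocksPartition B ((Finset.Icc i j).image f)

/-- The blocks obtained by developing the base blocks modulo 43. -/
def dev43 : Finset (Finset (ZMod 43)) :=
  Finset.univ.biUnion fun t : ZMod 43 =>
    ({{0,1,16}, {0,2,14}, {0,3,11}, {0,4,37}, {0,5,25}, {0,7,24}, {0,9,22}} : Finset (Finset (ZMod 43))).image (fun b => b.image (· + t))

def base43 : List (Finset (ZMod 43)) :=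
  [{0,1,16}, {0,2,14}, {0,3,11}, {0,4,37}, {0,5,25}, {0,7,24}, {0,9,22}]

def L0 : List (Fin 7 × ZMod 43) :=
  [(0, 1), (0, 3), (0, 5), (0, 7), (0, 13), (3, 28), (4, 34), (0, 36), (2, 30), (4, 15), (5, 31), (0, 10), (2, 24), (5, 18)]

def A0 : Finset (Finset (ZMod 43)) :=
  (L0.map fun p => (base43.get p.1).image (· + p.2)).toFinset

lemma A0_sub : ∀ b ∈ A0, ∃ t : ZMod 43, b ∈ ({{0,1,16}, {0,2,14}, {0,3,11}, {0,4,37}, {0,5,25}, {0,7,24}, {0,9,22}} : Finset (Finset (ZMod 43))).image (fun b => b.image (· + t)) := by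
  intro b hb
  obtain ⟨p, -, rfl⟩ := List.mem_map.1 (List.mem_toFinset.1 hb)
  refine ⟨p.2, Finset.mem_image.2 ⟨base43.get p.1, ?_, rfl⟩⟩
  have h : base43.get p.1 ∈ base43 := List.get_mem _ _
  simpa only [base43, List.mem_cons, List.not_mem_nil, or_false, Finset.mem_insert,
    Finset.mem_singleton] using h

lemma L0_disj : ∀ p ∈ L0, ∀ q ∈ L0, p ≠ q →
    ∀ x ∈ base43.get p.1, ∀ y ∈ base43.get q.1, x + p.2 ≠ y + q.2 := by
  decide +kernel

lemma A0_disj : ∀ b₁ ∈ A0, ∀ b₂ ∈ A0, b₁ ≠ b₂ → Disjoint b₁ b₂ := by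
  intro b₁ h₁ b₂ h₂ hne
  obtain ⟨p, hp, rfl⟩ := List.mem_map.1 (List.mem_toFinset.1 h₁)
  obtain ⟨q, hq, rfl⟩ := List.mem_map.1 (List.mem_toFinset.1 h₂)
  have hpq : p ≠ q := by
    rintro rfl
    exact hne rfl
  rw [Finset.disjoint_left]
  intro z hz hz'
  obtain ⟨x, hx, rfl⟩ := Finset.mem_image.1 hz
  obtain ⟨y, hy, e⟩ := Finset.mem_image.1 hz'
  exact L0_disj p hp q hq hpq x hx y hy e.symm

lemma A0_union : A0.biUnion id = Finset.univ.erase 0 := by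
  decide +kernel

def Ax (x : ZMod 43) : Finset (Finset (ZMod 43)) := A0.image (fun b => b.image (· + x))

lemma Ax_sub (x : ZMod 43) : Ax x ⊆ dev43 := by
  intro c hc
  obtain ⟨b, hb, rfl⟩ := Finset.mem_image.1 hc
  obtain ⟨t, ht⟩ := A0_sub b hb
  obtain ⟨d, hd, rfl⟩ := Finset.mem_image.1 ht
  refine Finset.mem_biUnion.2 ⟨t + x, Finset.mem_univ _, Finset.mem_image.2 ⟨d, hd, ?_⟩⟩
  simp only [Finset.image_image]
  congr 1
  funext y
  simp [add_assoc]

lemma Ax_disj (x : ZMod 43) : ∀ b₁ ∈ Ax x, ∀ b₂ ∈ Ax x, b₁ ≠ b₂ → Disjoint b₁ b₂ := by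
  intro b₁ h₁ b₂ h₂ hne
  obtain ⟨c₁, k₁, rfl⟩ := Finset.mem_image.1 h₁
  obtain ⟨c₂, k₂, rfl⟩ := Finset.mem_image.1 h₂
  refine (Finset.disjoint_image (add_left_injective x)).2 (A0_disj c₁ k₁ c₂ k₂ ?_)
  rintro rfl
  exact hne rfl

lemma Ax_union (x : ZMod 43) : (Ax x).biUnion id = Finset.univ.erase x := by
  ext y
  have h := congrArg (fun s : Finset (ZMod 43) => y - x ∈ s) A0_union
  simp only [Finset.mem_biUnion, Finset.mem_erase, Finset.mem_univ, id, and_true, eq_iff_iff,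
    sub_ne_zero] at h
  simp only [Ax, Finset.mem_biUnion, Finset.mem_erase, Finset.mem_univ, id, and_true,
    Finset.mem_image, ← h]
  constructor
  · rintro ⟨_, ⟨b, hb, rfl⟩, hy⟩
    obtain ⟨z, hz, rfl⟩ := Finset.mem_image.1 hy
    exact ⟨b, hb, by simpa using hz⟩
  · rintro ⟨b, hb, hy⟩
    exact ⟨_, ⟨b, hb, rfl⟩, Finset.mem_image.2 ⟨_, hy, by simp⟩⟩

theorem stmt12 :
    ¬ sequenceable dev43 ∧
    (∀ x : ZMod 43, ∃ A : Finset (Finset (ZMod 43)),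
      isAPC dev43 A ∧ x ∉ A.biUnion id) := by
  refine ⟨?_, fun x => ⟨Ax x, ⟨Ax_sub x, Ax_disj x, x, Ax_union x⟩, by simp [Ax_union]⟩⟩
  rintro ⟨f, hf⟩
  have hc : Fintype.card (ZMod 43) = 43 := ZMod.card 43
  have h0 : 0 < Fintype.card (ZMod 43) := by omega
  refine hf ⟨1, by omega⟩ ⟨42, by omega⟩ (by simp [Fin.le_def]) (by simp)
    ⟨Ax (f ⟨0, h0⟩), Ax_sub _, Ax_disj _, ?_⟩
  rw [Ax_union]
  ext y
  obtain ⟨i, rfl⟩ := f.surjective y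
  have hi := i.isLt
  simp only [Finset.mem_erase, Finset.mem_univ, and_true, Finset.mem_image, Finset.mem_Icc,
    f.injective.eq_iff, Fin.le_def, Fin.ext_iff, ne_eq]
  constructor
  · intro h
    exact ⟨i, ⟨by omega, by omega⟩, rfl⟩
  · rintro ⟨a, ⟨h1, h2⟩, h3⟩
    omega
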